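/- arXiv:0801.2549 — 2 statements merged into one kernel-verified Lean document; each statement's English description precedes it below -/
import Mathlib

section
/- Let α be an irrational real number satisfying the Brjuno condition B, let δ > 0, and let φ : B_δ → ℂ be a bounded holomorphic 1-periodic function with ∫₀¹ φ(x) dx = 0. Then there exists a holomorphic 1-periodic function ψ : B_δ → ℂ such that ψ(θ+α) − ψ(θ) = φ(θ) for all θ ∈ B_δ, and such that ∫₀¹ ψ(x) dx = 0. -/
noncomputable def distNearestInt (x : ℝ) : ℝ := |x - round x|

noncomputable def GammaA (α : ℝ) (N : ℕ) : ℝ :=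
  sSup ((fun n : ℤ => (distNearestInt ((n : ℝ) * α))⁻¹) '' {n : ℤ | n ≠ 0 ∧ |n| ≤ (N : ℤ)})

noncomputable def GammaAB (α β : ℝ) (N : ℕ) : ℝ :=
  sSup ((fun n : ℤ => (distNearestInt ((n : ℝ) * α - β))⁻¹) '' {n : ℤ | |n| ≤ (N : ℤ)})

def IsNonRationalPair (α β : ℝ) : Prop := ∀ k m : ℤ, (k : ℝ) * α - β ≠ (m : ℝ)

def BrjunoCond (α : ℝ) : Prop :=
  Summable (fun N : ℕ => Real.log (GammaA α (N + 1)) / ((N : ℝ) + 1) ^ 2)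

def Strip (δ : ℝ) : Set ℂ := {θ : ℂ | |θ.im| < δ}

/-!
Writing `φ = ∑ φₙ eₙ` with `eₙ θ = exp (2πinθ)`, the equation `ψ (θ + α) - ψ θ = φ θ` decouples
into `ψₙ (eₙ α - 1) = φₙ`, so the mean `ψ₀ = 0` is the only free choice and the only question is
convergence. Shifting the contour of integration to `Im θ = ±r` gives `φₙ = O(exp (-2πr|n|))` for
every `r < δ`, while `|eₙ α - 1|⁻¹ ≤ Γ_α(|n|)`. Since `log Γ_α` is monotone, summability of
`log Γ_α(N) / N²` forces `log Γ_α(N) = o(N)`: the small divisors cost less than any exponential,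
and the series of `ψ` converges on the same strip.
-/

open Filter Asymptotics Complex
open scoped Real Interval Topology

/-! ### Small divisors -/

theorem tendsto_sum_Ico_two_mul_of_summable {G : Type*} [AddCommGroup G] [TopologicalSpace G]
    [IsTopologicalAddGroup G] {u : ℕ → G} (hu : Summable u) :
    Tendsto (fun N => ∑ k ∈ Finset.Ico N (2 * N), u k) atTop (𝓝 0) := by
  have hpartial := hu.tendsto_sum_tsum_nat
  have htwo : Tendsto (fun N : ℕ => 2 * N) atTop atTop := tendsto_id.const_mul_atTop' two_pos
  have hdiff := (hpartial.comp htwo).sub hpartial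
  rw [sub_self] at hdiff
  exact hdiff.congr fun N => (Finset.sum_Ico_eq_sub _ (by lia)).symm

theorem isLittleO_natCast_of_monotone_of_summable_div_sq {a : ℕ → ℝ} (ha : Monotone a)
    (ha0 : ∀ N, 0 ≤ a N) (hsum : Summable fun N : ℕ => a N / (N : ℝ) ^ 2) :
    a =o[atTop] fun N : ℕ => (N : ℝ) := by
  have hle_block : ∀ N : ℕ, a N / N ≤ 4 * ∑ k ∈ Finset.Ico N (2 * N), a k / (k : ℝ) ^ 2 := by
    intro N
    rcases N.eq_zero_or_pos with rfl | hN
    · simp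
    have hterm : ∀ k ∈ Finset.Ico N (2 * N), a N / (2 * N) ^ 2 ≤ a k / (k : ℝ) ^ 2 := by
      intro k hk
      obtain ⟨hNk, hk2⟩ := Finset.mem_Ico.1 hk
      have hkpos : (0 : ℝ) < k := by exact_mod_cast hN.trans_le hNk
      have hk_le : (k : ℝ) ≤ 2 * N := by exact_mod_cast hk2.le
      have := ha0 k
      gcongr
      exact ha hNk
    calc a N / N = 4 * ((Finset.Ico N (2 * N)).card • (a N / (2 * N) ^ 2)) := by
          rw [Nat.card_Ico, show 2 * N - N = N by lia, nsmul_eq_mul]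
          field_simp
          norm_num
      _ ≤ 4 * ∑ k ∈ Finset.Ico N (2 * N), a k / (k : ℝ) ^ 2 := by
          gcongr
          exact Finset.card_nsmul_le_sum _ _ _ hterm
  refine (isLittleO_iff_tendsto' ?_).2 ?_
  · filter_upwards [eventually_ne_atTop 0] with N hN h0
    exact absurd h0 (Nat.cast_ne_zero.2 hN)
  · exact squeeze_zero (fun N => div_nonneg (ha0 N) N.cast_nonneg) hle_block
      (by simpa using (tendsto_sum_Ico_two_mul_of_summable hsum).const_mul 4)

theorem distNearestInt_intCast_mul_pos {α : ℝ} (hα : Irrational α) {n : ℤ} (hn : n ≠ 0) :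
    0 < distNearestInt (n * α) :=
  abs_pos.2 (sub_ne_zero.2 ((hα.intCast_mul hn).ne_int _))

theorem inv_distNearestInt_le_gammaA (α : ℝ) {N : ℕ} {n : ℤ} (hn : n ≠ 0) (hN : |n| ≤ N) :
    (distNearestInt (n * α))⁻¹ ≤ GammaA α N := by
  refine le_csSup (Set.Finite.bddAbove (Set.Finite.image _ ?_)) ⟨n, ⟨hn, hN⟩, rfl⟩
  exact (Set.finite_Icc (-(N : ℤ)) N).subset fun m hm => abs_le.1 hm.2

theorem one_le_gammaA {α : ℝ} (hα : Irrational α) {N : ℕ} (hN : N ≠ 0) : 1 ≤ GammaA α N := by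
  refine le_trans ?_ (inv_distNearestInt_le_gammaA α one_ne_zero (N := N) (by simp; lia))
  refine (one_le_inv₀ (distNearestInt_intCast_mul_pos hα one_ne_zero)).2 ?_
  exact (abs_sub_round _).trans (by norm_num)

theorem gammaA_zero (α : ℝ) : GammaA α 0 = 0 := by
  have hempty : {n : ℤ | n ≠ 0 ∧ |n| ≤ ((0 : ℕ) : ℤ)} = ∅ := by
    ext n
    simp
  rw [GammaA, hempty, Set.image_empty, Real.sSup_empty]

theorem gammaA_mono (α : ℝ) : Monotone (GammaA α) := by
  intro M N hMN
  refine Real.sSup_le ?_ ?_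
  · rintro _ ⟨n, ⟨hn, hnM⟩, rfl⟩
    exact inv_distNearestInt_le_gammaA α hn (hnM.trans (by exact_mod_cast hMN))
  · refine Real.sSup_nonneg ?_
    rintro _ ⟨n, -, rfl⟩
    exact inv_nonneg.2 (abs_nonneg _)

theorem log_gammaA_nonneg {α : ℝ} (hα : Irrational α) (N : ℕ) : 0 ≤ Real.log (GammaA α N) := by
  rcases eq_or_ne N 0 with rfl | hN
  · rw [gammaA_zero, Real.log_zero]
  · exact Real.log_nonneg (one_le_gammaA hα hN)

theorem monotone_log_gammaA {α : ℝ} (hα : Irrational α) :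
    Monotone fun N => Real.log (GammaA α N) := by
  intro M N hMN
  rcases eq_or_ne M 0 with rfl | hM
  · simpa only [gammaA_zero, Real.log_zero] using log_gammaA_nonneg hα N
  · exact Real.log_le_log (one_pos.trans_le (one_le_gammaA hα hM)) (gammaA_mono α hMN)

theorem BrjunoCond.isLittleO_log_gammaA {α : ℝ} (hα : Irrational α) (hB : BrjunoCond α) :
    (fun N => Real.log (GammaA α N)) =o[atTop] fun N : ℕ => (N : ℝ) := by
  refine isLittleO_natCast_of_monotone_of_summable_div_sq (monotone_log_gammaA hα)
    (log_gammaA_nonneg hα) ((summable_nat_add_iff 1).1 ?_)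
  simpa only [BrjunoCond, Nat.cast_add_one] using hB

theorem four_mul_distNearestInt_le_norm_exp_sub_one (t : ℝ) :
    4 * distNearestInt t ≤ ‖cexp (2 * π * I * t) - 1‖ := by
  set s : ℝ := t - round t with hs
  have hexp : cexp (2 * π * I * t) = cexp (I * ((2 * π * s : ℝ) : ℂ)) := by
    refine Complex.exp_eq_exp_iff_exists_int.2 ⟨round t, ?_⟩
    push_cast [hs]
    ring
  have hsmall : |π * s| ≤ π / 2 := by
    rw [abs_mul, abs_of_pos Real.pi_pos]
    linarith [mul_le_mul_of_nonneg_left (abs_sub_round t) Real.pi_pos.le]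
  calc 4 * distNearestInt t = 2 * (2 / π * |π * s|) := by
        rw [abs_mul, abs_of_pos Real.pi_pos, distNearestInt, ← hs]
        field_simp
        ring
    _ ≤ 2 * |Real.sin (π * s)| := by
        gcongr
        exact Real.mul_abs_le_abs_sin hsmall
    _ = ‖cexp (2 * π * I * t) - 1‖ := by
        rw [hexp, norm_exp_I_mul_ofReal_sub_one, norm_mul, Real.norm_ofNat, Real.norm_eq_abs]
        ring_nf

/-! ### Fourier series on a strip -/

/-- The Fourier mode `θ ↦ exp (2πinθ)` of frequency `n`, on the complex plane. -/
noncomputable def fourierMode (n : ℤ) (θ : ℂ) : ℂ :=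
  cexp (2 * π * I * n * θ)

/-- The sum `∑ dₙ exp (2πinθ)` of the two-sided Fourier series with coefficients `d`; being a
`tsum`, it is `0` wherever the series is not summable. -/
noncomputable def fourierSeries (d : ℤ → ℂ) (θ : ℂ) : ℂ :=
  ∑' n : ℤ, d n * fourierMode n θ

/-- The `n`-th Fourier coefficient of a `1`-periodic function on a strip, computed on the real
line. -/
noncomputable def stripCoeff (f : ℂ → ℂ) (n : ℤ) : ℂ :=
  ∫ x in (0 : ℝ)..1, fourierMode (-n) x * f x

/-- Summability of `d` against `exp (2πr|n|)` for all `0 ≤ r < δ`: the condition on coefficients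
under which the Fourier series converges normally on every strip strictly inside `Strip δ`. -/
def StripSummable (δ : ℝ) (d : ℤ → ℂ) : Prop :=
  ∀ ⦃r : ℝ⦄, 0 ≤ r → r < δ → Summable fun n : ℤ => ‖d n‖ * Real.exp (2 * π * r * |(n : ℝ)|)

@[simp]
theorem fourierMode_zero (θ : ℂ) : fourierMode 0 θ = 1 := by
  simp [fourierMode]

theorem fourierMode_add (n : ℤ) (θ η : ℂ) :
    fourierMode n (θ + η) = fourierMode n θ * fourierMode n η := by
  rw [fourierMode, mul_add, Complex.exp_add, fourierMode, fourierMode]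

theorem fourierMode_intCast (n m : ℤ) : fourierMode n m = 1 := by
  rw [fourierMode, Complex.exp_eq_one_iff]
  exact ⟨n * m, by push_cast; ring⟩

theorem fourierMode_add_one (n : ℤ) (θ : ℂ) : fourierMode n (θ + 1) = fourierMode n θ := by
  rw [fourierMode_add, ← Int.cast_one, fourierMode_intCast, mul_one]

theorem fourierMode_neg (n : ℤ) (θ : ℂ) : fourierMode (-n) θ = (fourierMode n θ)⁻¹ := by
  rw [fourierMode, fourierMode, ← Complex.exp_neg]
  push_cast
  ring_nf

theorem fourierMode_ne_zero (n : ℤ) (θ : ℂ) : fourierMode n θ ≠ 0 :=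
  Complex.exp_ne_zero _

theorem differentiable_fourierMode (n : ℤ) : Differentiable ℂ (fourierMode n) := by
  unfold fourierMode
  fun_prop

theorem norm_fourierMode (n : ℤ) (θ : ℂ) :
    ‖fourierMode n θ‖ = Real.exp (-(2 * π * n * θ.im)) := by
  rw [fourierMode, Complex.norm_exp]
  simp

theorem norm_fourierMode_le (n : ℤ) {θ : ℂ} {r : ℝ} (hθ : |θ.im| ≤ r) :
    ‖fourierMode n θ‖ ≤ Real.exp (2 * π * r * |(n : ℝ)|) := by
  rw [norm_fourierMode, Real.exp_le_exp]
  calc -(2 * π * n * θ.im) ≤ |2 * π * n * θ.im| := neg_le_abs _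
    _ = 2 * π * |θ.im| * |(n : ℝ)| := by
        simp only [abs_mul, abs_two, abs_of_pos Real.pi_pos]
        ring
    _ ≤ 2 * π * r * |(n : ℝ)| := by gcongr

theorem integral_fourierMode (n : ℤ) :
    ∫ x in (0 : ℝ)..1, fourierMode n x = if n = 0 then 1 else 0 := by
  split_ifs with hn
  · simp [hn]
  · have hc : 2 * π * I * (n : ℂ) ≠ 0 := by simp [hn, Real.pi_ne_zero]
    have hperiod : cexp (2 * π * I * n * (1 : ℝ)) = 1 := by
      simpa [fourierMode] using fourierMode_intCast n 1
    simp only [fourierMode]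
    rw [integral_exp_mul_complex hc, hperiod]
    simp

theorem fourierSeries_add_one (d : ℤ → ℂ) (θ : ℂ) :
    fourierSeries d (θ + 1) = fourierSeries d θ := by
  simp only [fourierSeries, fourierMode_add_one]

theorem stripCoeff_zero (f : ℂ → ℂ) : stripCoeff f 0 = ∫ x in (0 : ℝ)..1, f x := by
  simp [stripCoeff]

theorem isOpen_strip (δ : ℝ) : IsOpen (Strip δ) :=
  isOpen_lt (by fun_prop) continuous_const

theorem add_ofReal_mem_strip {δ : ℝ} {θ : ℂ} (hθ : θ ∈ Strip δ) (x : ℝ) : θ + x ∈ Strip δ := by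
  simpa [Strip] using hθ

theorem ofReal_add_mul_I_mem_strip {δ y : ℝ} (hy : |y| < δ) (x : ℝ) :
    (x : ℂ) + y * I ∈ Strip δ := by
  simpa [Strip] using hy

namespace StripSummable

variable {δ : ℝ} {d : ℤ → ℂ}

theorem of_norm_le_mul_exp {c : ℤ → ℂ} (hd : StripSummable δ d)
    (hcd : ∀ ε > 0, ∀ᶠ n : ℤ in cofinite, ‖c n‖ ≤ ‖d n‖ * Real.exp (ε * |(n : ℝ)|)) :
    StripSummable δ c := by
  intro r hr0 hrδ
  obtain ⟨s, hrs, hsδ⟩ := exists_between hrδ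
  have hε : 0 < 2 * π * (s - r) := mul_pos Real.two_pi_pos (sub_pos.2 hrs)
  refine Summable.of_norm_bounded_eventually (hd (hr0.trans hrs.le) hsδ) ?_
  filter_upwards [hcd _ hε] with n hn
  rw [Real.norm_of_nonneg (by positivity)]
  calc ‖c n‖ * Real.exp (2 * π * r * |(n : ℝ)|)
      ≤ ‖d n‖ * Real.exp (2 * π * (s - r) * |(n : ℝ)|) * Real.exp (2 * π * r * |(n : ℝ)|) := by
        gcongr
    _ = ‖d n‖ * Real.exp (2 * π * s * |(n : ℝ)|) := by
        rw [mul_assoc, ← Real.exp_add]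
        ring_nf

theorem summable_norm (hd : StripSummable δ d) (hδ : 0 < δ) : Summable fun n => ‖d n‖ := by
  simpa using hd le_rfl hδ

theorem summable_norm_mul_fourierMode (hd : StripSummable δ d) {θ : ℂ} (hθ : θ ∈ Strip δ) :
    Summable fun n : ℤ => ‖d n * fourierMode n θ‖ := by
  refine Summable.of_nonneg_of_le (fun n => norm_nonneg _) (fun n => ?_) (hd (abs_nonneg _) hθ)
  rw [norm_mul]
  gcongr
  exact norm_fourierMode_le n le_rfl

theorem differentiableOn_fourierSeries (hd : StripSummable δ d) :
    DifferentiableOn ℂ (fourierSeries d) (Strip δ) := by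
  intro θ hθ
  obtain ⟨r, hθr, hrδ⟩ := exists_between (show |θ.im| < δ from hθ)
  have hr : DifferentiableOn ℂ (fourierSeries d) (Strip r) := by
    refine differentiableOn_tsum_of_summable_norm (hd ((abs_nonneg _).trans hθr.le) hrδ)
      (fun n => ((differentiable_fourierMode n).const_mul _).differentiableOn) (isOpen_strip r)
      fun n w hw => ?_
    rw [norm_mul]
    gcongr
    exact norm_fourierMode_le n hw.le
  exact (hr.differentiableAt ((isOpen_strip r).mem_nhds hθr)).differentiableWithinAt

end StripSummable

theorem integral_fourierSeries {d : ℤ → ℂ} (hd : Summable fun n => ‖d n‖) :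
    ∫ x in (0 : ℝ)..1, fourierSeries d x = d 0 := by
  have hnorm (n : ℤ) (x : ℝ) : ‖d n * fourierMode n x‖ = ‖d n‖ := by simp [norm_fourierMode]
  have hint := intervalIntegral.hasSum_integral_of_dominated_convergence
    (μ := MeasureTheory.volume) (a := 0) (b := 1) (f := fun x : ℝ => fourierSeries d x)
    (F := fun (n : ℤ) (x : ℝ) => d n * fourierMode n x) (fun n _ => ‖d n‖)
    (fun n => (continuous_const.mul ((differentiable_fourierMode n).continuous.comp
      continuous_ofReal)).aestronglyMeasurable)
    (fun n => .of_forall fun x _ => (hnorm n x).le) (.of_forall fun _ _ => hd)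
    intervalIntegrable_const
    (.of_forall fun x _ => (Summable.of_norm (by simpa only [hnorm] using hd)).hasSum)
  simp only [intervalIntegral.integral_const_mul, integral_fourierMode] at hint
  simpa using hint.unique (hasSum_single 0 fun n hn => by simp [hn])

/-! ### Fourier coefficients of periodic holomorphic functions -/

theorem intervalIntegral_add_mul_I_eq_of_periodic {E : Type*} [NormedAddCommGroup E]
    [NormedSpace ℂ E] {δ T y : ℝ} {f : ℂ → E} (hf : DifferentiableOn ℂ f (Strip δ))
    (hper : ∀ θ ∈ Strip δ, f (θ + T) = f θ) (hy : |y| < δ) :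
    ∫ x in (0 : ℝ)..T, f (x + y * I) = ∫ x in (0 : ℝ)..T, f x := by
  have hlt : ∀ t ∈ [[0, y]], |t| < δ := fun t ht => by
    simpa using (Set.abs_sub_left_of_mem_uIcc ht).trans_lt (by simpa using hy)
  have hrect := integral_boundary_rect_eq_zero_of_differentiableOn f 0 (T + y * I)
    (hf.mono fun z hz => hlt z.im (by simpa using hz.2))
  have hsides : ∫ t in (0 : ℝ)..y, f (T + t * I) = ∫ t in (0 : ℝ)..y, f (t * I) := by
    refine intervalIntegral.integral_congr fun t ht => ?_
    have hmem : (t : ℂ) * I ∈ Strip δ := by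
      simpa using ofReal_add_mul_I_mem_strip (hlt t ht) 0
    simpa only [add_comm] using hper _ hmem
  simp only [zero_re, zero_im, add_re, add_im, mul_re, mul_im, ofReal_re, ofReal_im, I_re, I_im,
    mul_zero, mul_one, ofReal_zero, zero_mul, add_zero, zero_add, sub_zero, hsides,
    add_sub_cancel_right] at hrect
  exact (sub_eq_zero.1 hrect).symm

theorem summable_exp_neg_mul_abs_intCast {c : ℝ} (hc : 0 < c) :
    Summable fun n : ℤ => Real.exp (-c * |(n : ℝ)|) := by
  have hnat : Summable fun n : ℕ => Real.exp (-c * n) := by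
    simpa only [mul_comm] using Real.summable_exp_nat_mul_iff.2 (neg_lt_zero.2 hc)
  exact Summable.of_nat_of_neg (by simpa using hnat) (by simpa using hnat)

section HolomorphicPeriodic

variable {δ : ℝ} {f : ℂ → ℂ}

theorem stripCoeff_eq_integral_add_mul_I (hf : DifferentiableOn ℂ f (Strip δ))
    (hper : ∀ θ ∈ Strip δ, f (θ + 1) = f θ) {y : ℝ} (hy : |y| < δ) (n : ℤ) :
    stripCoeff f n = ∫ x in (0 : ℝ)..1, fourierMode (-n) (x + y * I) * f (x + y * I) :=
  (intervalIntegral_add_mul_I_eq_of_periodic (f := fun θ => fourierMode (-n) θ * f θ)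
    ((differentiable_fourierMode (-n)).differentiableOn.mul hf)
    (fun θ hθ => by rw [ofReal_one, fourierMode_add_one, hper θ hθ]) hy).symm

theorem norm_stripCoeff_le_of_norm_le (hf : DifferentiableOn ℂ f (Strip δ))
    (hper : ∀ θ ∈ Strip δ, f (θ + 1) = f θ) {y C : ℝ} (hy : |y| < δ)
    (hC : ∀ x ∈ Set.Icc (0 : ℝ) 1, ‖f (x + y * I)‖ ≤ C) (n : ℤ) :
    ‖stripCoeff f n‖ ≤ C * Real.exp (2 * π * n * y) := by
  rw [stripCoeff_eq_integral_add_mul_I hf hper hy]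
  refine (intervalIntegral.norm_integral_le_of_norm_le_const
    (C := C * Real.exp (2 * π * n * y)) fun x hx => ?_).trans (by simp)
  rw [Set.uIoc_of_le zero_le_one] at hx
  have hmode : ‖fourierMode (-n) (x + y * I)‖ = Real.exp (2 * π * n * y) := by
    simp [norm_fourierMode]
  rw [norm_mul, hmode, mul_comm]
  gcongr
  exact hC x (Set.Ioc_subset_Icc_self hx)

theorem exists_norm_stripCoeff_le (hf : DifferentiableOn ℂ f (Strip δ))
    (hper : ∀ θ ∈ Strip δ, f (θ + 1) = f θ) {r : ℝ} (hr0 : 0 ≤ r) (hr : r < δ) :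
    ∃ C, ∀ n : ℤ, ‖stripCoeff f n‖ ≤ C * Real.exp (-(2 * π * r * |(n : ℝ)|)) := by
  have hsub : Set.Icc 0 1 ×ℂ Set.Icc (-r) r ⊆ Strip δ := fun z hz =>
    (abs_le.2 hz.2).trans_lt hr
  obtain ⟨C, hC⟩ := (isCompact_Icc.reProdIm isCompact_Icc).exists_bound_of_continuousOn
    (hf.continuousOn.mono hsub)
  have hline : ∀ y, |y| ≤ r → ∀ n : ℤ, ‖stripCoeff f n‖ ≤ C * Real.exp (2 * π * n * y) :=
    fun y hy => norm_stripCoeff_le_of_norm_le hf hper (hy.trans_lt hr) fun x hx =>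
      hC _ (by simpa [mem_reProdIm] using ⟨hx, abs_le.1 hy⟩)
  refine ⟨C, fun n => ?_⟩
  rcases le_total 0 (n : ℝ) with hn | hn
  · have h := hline (-r) (by rw [abs_neg, abs_of_nonneg hr0]) n
    rw [abs_of_nonneg hn]
    exact h.trans_eq (by ring_nf)
  · have h := hline r (abs_of_nonneg hr0).le n
    rw [abs_of_nonpos hn]
    exact h.trans_eq (by ring_nf)

theorem stripSummable_stripCoeff (hf : DifferentiableOn ℂ f (Strip δ))
    (hper : ∀ θ ∈ Strip δ, f (θ + 1) = f θ) : StripSummable δ (stripCoeff f) := by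
  intro r hr0 hrδ
  obtain ⟨s, hrs, hsδ⟩ := exists_between hrδ
  obtain ⟨C, hC⟩ := exists_norm_stripCoeff_le hf hper (hr0.trans hrs.le) hsδ
  have hpos : 0 < 2 * π * (s - r) := mul_pos Real.two_pi_pos (sub_pos.2 hrs)
  refine Summable.of_nonneg_of_le (fun n => by positivity) (fun n => ?_)
    ((summable_exp_neg_mul_abs_intCast hpos).mul_left C)
  calc ‖stripCoeff f n‖ * Real.exp (2 * π * r * |(n : ℝ)|)
      ≤ C * Real.exp (-(2 * π * s * |(n : ℝ)|)) * Real.exp (2 * π * r * |(n : ℝ)|) := by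
        gcongr
        exact hC n
    _ = C * Real.exp (-(2 * π * (s - r)) * |(n : ℝ)|) := by
        rw [mul_assoc, ← Real.exp_add]
        ring_nf

theorem fourierSeries_stripCoeff (hf : DifferentiableOn ℂ f (Strip δ))
    (hper : ∀ θ ∈ Strip δ, f (θ + 1) = f θ) {θ : ℂ} (hθ : θ ∈ Strip δ) :
    fourierSeries (stripCoeff f) θ = f θ := by
  set y := θ.im with hy
  have hyδ : |y| < δ := hθ
  have hline_per : Function.Periodic (fun x : ℝ => f (x + y * I)) 1 := fun x => by
    simpa [add_right_comm] using hper _ (ofReal_add_mul_I_mem_strip hyδ x)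
  have hline_cont : Continuous fun x : ℝ => f (x + y * I) :=
    hf.continuousOn.comp_continuous (by fun_prop) (ofReal_add_mul_I_mem_strip hyδ)
  let g : C(UnitAddCircle, ℂ) := ⟨hline_per.lift, continuous_coinduced_dom.2 hline_cont⟩
  have hg (x : ℝ) : g x = f (x + y * I) := rfl
  have hfourier (n : ℤ) (x : ℝ) : fourier n (x : UnitAddCircle) = fourierMode n x := by
    simp [fourierMode]
  have hcoeff (n : ℤ) : fourierCoeff g n = stripCoeff f n * fourierMode n (y * I) := by
    rw [fourierCoeff_eq_intervalIntegral _ n 0, stripCoeff_eq_integral_add_mul_I hf hper hyδ,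
      ← intervalIntegral.integral_mul_const]
    simp only [hfourier, hg, fourierMode_add, fourierMode_neg n (y * I), zero_add, div_one,
      one_smul, smul_eq_mul]
    refine intervalIntegral.integral_congr fun x _ => ?_
    field_simp [fourierMode_ne_zero n (y * I)]
  have hterm (n : ℤ) :
      fourierCoeff g n * fourierMode n θ.re = stripCoeff f n * fourierMode n θ := by
    rw [hcoeff, mul_assoc, ← fourierMode_add, add_comm, hy, re_add_im]
  have hsum : Summable (fourierCoeff g) := by
    refine Summable.of_norm ?_
    simpa only [hcoeff] using (stripSummable_stripCoeff hf hper).summable_norm_mul_fourierMode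
      (by simpa using ofReal_add_mul_I_mem_strip hyδ 0)
  have h := has_pointwise_sum_fourier_series_of_summable hsum (θ.re : UnitAddCircle)
  simp only [hfourier, smul_eq_mul, hterm, hg, hy, re_add_im] at h
  exact h.tsum_eq

end HolomorphicPeriodic

/-! ### The cohomological equation -/

/-- Coefficients of the formal solution of `ψ (θ + α) - ψ θ = ∑ dₙ exp (2πinθ)`. The zeroth one is
`0` because its denominator vanishes. -/
noncomputable def cohomCoeff (α : ℝ) (d : ℤ → ℂ) (n : ℤ) : ℂ :=
  d n / (fourierMode n α - 1)

theorem cohomCoeff_zero (α : ℝ) (d : ℤ → ℂ) : cohomCoeff α d 0 = 0 := by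
  simp [cohomCoeff]

theorem four_mul_distNearestInt_le_norm_fourierMode_sub_one (α : ℝ) (n : ℤ) :
    4 * distNearestInt (n * α) ≤ ‖fourierMode n α - 1‖ := by
  simpa [fourierMode, mul_assoc] using four_mul_distNearestInt_le_norm_exp_sub_one (n * α)

theorem fourierMode_sub_one_ne_zero {α : ℝ} (hα : Irrational α) {n : ℤ} (hn : n ≠ 0) :
    fourierMode n α - 1 ≠ 0 :=
  norm_pos_iff.1 <| (mul_pos four_pos (distNearestInt_intCast_mul_pos hα hn)).trans_le
    (four_mul_distNearestInt_le_norm_fourierMode_sub_one α n)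

theorem norm_cohomCoeff_le {α : ℝ} (hα : Irrational α) (d : ℤ → ℂ) {n : ℤ} (hn : n ≠ 0) :
    ‖cohomCoeff α d n‖ ≤ ‖d n‖ * GammaA α n.natAbs := by
  have hpos := distNearestInt_intCast_mul_pos hα hn
  rw [cohomCoeff, norm_div, div_eq_mul_inv]
  gcongr
  calc ‖fourierMode n α - 1‖⁻¹ ≤ (distNearestInt (n * α))⁻¹ := by
        gcongr
        linarith [four_mul_distNearestInt_le_norm_fourierMode_sub_one α n]
    _ ≤ GammaA α n.natAbs := inv_distNearestInt_le_gammaA α hn (by simp)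

theorem tendsto_natAbs_cofinite_atTop : Tendsto Int.natAbs cofinite atTop := by
  rw [← Nat.cofinite_eq_atTop]
  refine Tendsto.cofinite_of_finite_preimage_singleton fun k => ?_
  exact (Set.finite_Icc (-(k : ℤ)) k).subset fun n (hn : n.natAbs = k) => by
    constructor <;> lia

theorem StripSummable.cohomCoeff {α δ : ℝ} {d : ℤ → ℂ} (hd : StripSummable δ d)
    (hα : Irrational α)
    (hΓ : (fun N => Real.log (GammaA α N)) =o[atTop] fun N : ℕ => (N : ℝ)) :
    StripSummable δ (cohomCoeff α d) := by
  refine hd.of_norm_le_mul_exp fun ε hε => ?_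
  filter_upwards [tendsto_natAbs_cofinite_atTop.eventually (hΓ.bound hε), eventually_cofinite_ne 0]
    with n hn hn0
  refine (norm_cohomCoeff_le hα d hn0).trans ?_
  gcongr
  calc GammaA α n.natAbs ≤ Real.exp (Real.log (GammaA α n.natAbs)) := Real.le_exp_log _
    _ ≤ Real.exp (ε * |(n : ℝ)|) := by
        rw [Real.exp_le_exp]
        simpa using (le_abs_self _).trans hn

theorem fourierSeries_cohomCoeff_add_sub {α δ : ℝ} (hα : Irrational α) {d : ℤ → ℂ} (hd0 : d 0 = 0)
    (hc : StripSummable δ (cohomCoeff α d)) {θ : ℂ} (hθ : θ ∈ Strip δ) :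
    fourierSeries (cohomCoeff α d) (θ + α) - fourierSeries (cohomCoeff α d) θ
      = fourierSeries d θ := by
  have hsum {η : ℂ} (hη : η ∈ Strip δ) := (hc.summable_norm_mul_fourierMode hη).of_norm
  rw [fourierSeries, fourierSeries, ← (hsum (add_ofReal_mem_strip hθ α)).tsum_sub (hsum hθ)]
  refine tsum_congr fun n => ?_
  rcases eq_or_ne n 0 with rfl | hn
  · simp [cohomCoeff_zero, hd0]
  · have := fourierMode_sub_one_ne_zero hα hn
    rw [fourierMode_add, cohomCoeff]
    field_simp

theorem stmt_3_general {α : ℝ} (hα : Irrational α)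
    (hΓ : (fun N => Real.log (GammaA α N)) =o[atTop] fun N : ℕ => (N : ℝ)) {δ : ℝ} (hδ : 0 < δ)
    {φ : ℂ → ℂ} (hφ : DifferentiableOn ℂ φ (Strip δ))
    (hper : ∀ θ ∈ Strip δ, φ (θ + 1) = φ θ) (hmean : (∫ x in (0 : ℝ)..1, φ x) = 0) :
    ∃ ψ : ℂ → ℂ, DifferentiableOn ℂ ψ (Strip δ) ∧
      (∀ θ ∈ Strip δ, ψ (θ + 1) = ψ θ) ∧
      (∀ θ ∈ Strip δ, ψ (θ + α) - ψ θ = φ θ) ∧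
      (∫ x in (0 : ℝ)..1, ψ x) = 0 := by
  have hc := (stripSummable_stripCoeff hφ hper).cohomCoeff hα hΓ
  refine ⟨fourierSeries (cohomCoeff α (stripCoeff φ)), hc.differentiableOn_fourierSeries,
    fun θ _ => fourierSeries_add_one _ θ, fun θ hθ => ?_, ?_⟩
  · have hzero : stripCoeff φ 0 = 0 := (stripCoeff_zero φ).trans hmean
    rw [fourierSeries_cohomCoeff_add_sub hα hzero hc hθ, fourierSeries_stripCoeff hφ hper hθ]
  · rw [integral_fourierSeries (hc.summable_norm hδ), cohomCoeff_zero]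

/-- solvability of the cohomological equation on the strip under the
Brjuno condition, with a zero-mean solution. -/
theorem stmt_3 (α : ℝ) (hα : Irrational α) (hB : BrjunoCond α) (δ : ℝ) (hδ : 0 < δ)
    (φ : ℂ → ℂ) (hφ : DifferentiableOn ℂ φ (Strip δ))
    (hper : ∀ θ ∈ Strip δ, φ (θ + 1) = φ θ)
    (hbd : ∃ C : ℝ, ∀ θ ∈ Strip δ, ‖φ θ‖ ≤ C)
    (hmean : (∫ x in (0:ℝ)..1, φ x) = 0) :
    ∃ ψ : ℂ → ℂ, DifferentiableOn ℂ ψ (Strip δ) ∧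
      (∀ θ ∈ Strip δ, ψ (θ + 1) = ψ θ) ∧
      (∀ θ ∈ Strip δ, ψ (θ + α) - ψ θ = φ θ) ∧
      (∫ x in (0:ℝ)..1, ψ x) = 0 := by
  exact stmt_3_general hα (hB.isLittleO_log_gammaA hα) hδ hφ hper hmean
end

section
/- Let (α,β) be a pair of real numbers satisfying condition B₁. Then there exists a constant K₁ > 0, depending only on (α,β), such that for every ℵ > 2 the following holds. Set A_n = Γ_{α,β}(2^n), B_n = Γ_α(2^n) and l_n = e^{−n²}/(16 ℵ A_n B_n 2^n). Then there exists a sequence of real positive numbers d_n¹ > 0 (n ≥ 0) such that l_{n+1} = ℵ l_n e^{−2π 2^n d_n¹}/d_n¹ for every n ≥ 0, and ∑_{n≥0} d_n¹ < K₁ (1 + log ℵ). -/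
/-- Condition B₁ for a pair (α,β). -/
def BrjunoPairCond (α β : ℝ) : Prop :=
  Irrational α ∧ IsNonRationalPair α β ∧ BrjunoCond α ∧
    Summable (fun n : ℕ => Real.log (GammaAB α β (n + 1)) / ((n : ℝ) + 1) ^ 2)

/-!
With `lₙ = Lₙ / ℵ`, the recursion says that `w = 2π 2ⁿ dₙ` solves `w eʷ = 2π 2ⁿ ℵ Lₙ / Lₙ₊₁`, and
the solution of `w eʷ = x` is at most `1 + log⁺ x`. Hence `∑ dₙ` is finite, and at most affine in
`log⁺ ℵ`, as soon as `∑ |log Lₙ| / 2ⁿ < ∞`. Because `log Γ_α` and `log Γ_{α,β}` are nondecreasing,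
grouping the integers into dyadic blocks turns the Brjuno conditions, which are sums over all
integers weighted by `N⁻²`, into sums over powers of two weighted by `2⁻ⁿ`.
-/

section

open Real

section DyadicBlocks

variable {g : ℕ → ℝ} {p : ℕ}

theorem two_pow_div_le_sum_Ico (hg1 : 0 ≤ g 1) (hmono : MonotoneOn g (Set.Ici 1)) (n : ℕ) :
    g (2 ^ n) / (2 ^ n) ^ p ≤
      2 ^ (p + 1) * ∑ N ∈ Finset.Ico (2 ^ n) (2 ^ (n + 1)), g N / (N : ℝ) ^ (p + 1) := by
  have term_bound : ∀ N ∈ Finset.Ico (2 ^ n) (2 ^ (n + 1)),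
      g (2 ^ n) / ((2 : ℝ) ^ (n + 1)) ^ (p + 1) ≤ g N / (N : ℝ) ^ (p + 1) := by
    intro N hN
    rw [Finset.mem_Ico] at hN
    have hN1 : 1 ≤ N := Nat.one_le_two_pow.trans hN.1
    have hN_le : (N : ℝ) ≤ 2 ^ (n + 1) := mod_cast hN.2.le
    exact div_le_div₀ (hg1.trans (hmono Set.self_mem_Ici hN1 hN1))
      (hmono Nat.one_le_two_pow hN1 hN.1) (by positivity) (by gcongr)
  have card_block : (Finset.Ico (2 ^ n) (2 ^ (n + 1))).card = 2 ^ n := by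
    rw [Nat.card_Ico, pow_succ]; lia
  have sum_bound := Finset.card_nsmul_le_sum _ _ _ term_bound
  rw [card_block, nsmul_eq_mul] at sum_bound
  calc g (2 ^ n) / (2 ^ n) ^ p
      = 2 ^ (p + 1) * (((2 ^ n : ℕ) : ℝ) * (g (2 ^ n) / ((2 : ℝ) ^ (n + 1)) ^ (p + 1))) := by
        push_cast; field_simp; ring
    _ ≤ _ := by gcongr

theorem summable_two_pow_div_of_summable_div_pow_succ (hg1 : 0 ≤ g 1)
    (hmono : MonotoneOn g (Set.Ici 1)) (hsum : Summable fun N : ℕ => g N / (N : ℝ) ^ (p + 1)) :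
    Summable fun n : ℕ => g (2 ^ n) / (2 ^ n) ^ p := by
  have g_nonneg {N : ℕ} (hN : 1 ≤ N) : 0 ≤ g N := hg1.trans (hmono Set.self_mem_Ici hN hN)
  set S : ℕ → ℝ := fun M => ∑ N ∈ Finset.range M, g N / (N : ℝ) ^ (p + 1) with hS
  have block_bound (n : ℕ) :
      g (2 ^ n) / (2 ^ n) ^ p ≤ 2 ^ (p + 1) * (S (2 ^ (n + 1)) - S (2 ^ n)) := by
    rw [← Finset.sum_Ico_eq_sub _ (Nat.pow_le_pow_right two_pos n.le_succ)]
    exact two_pow_div_le_sum_Ico hg1 hmono n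
  have le_tsum (M : ℕ) : S (2 ^ M) ≤ ∑' N : ℕ, g N / (N : ℝ) ^ (p + 1) :=
    hsum.sum_le_tsum _ fun N hN => by
      have hN1 : 1 ≤ N := Nat.one_le_two_pow.trans (by simpa using hN)
      exact div_nonneg (g_nonneg hN1) (by positivity)
  refine summable_of_sum_range_le
    (fun n => div_nonneg (g_nonneg Nat.one_le_two_pow) (by positivity))
    (c := 2 ^ (p + 1) * ∑' N : ℕ, g N / (N : ℝ) ^ (p + 1)) fun M => ?_
  calc ∑ n ∈ Finset.range M, g (2 ^ n) / (2 ^ n) ^ p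
      ≤ ∑ n ∈ Finset.range M, 2 ^ (p + 1) * (S (2 ^ (n + 1)) - S (2 ^ n)) :=
        Finset.sum_le_sum fun n _ => block_bound n
    _ = 2 ^ (p + 1) * S (2 ^ M) := by
        rw [← Finset.mul_sum, Finset.sum_range_sub fun n => S (2 ^ n)]; simp [hS]
    _ ≤ _ := by gcongr; exact le_tsum M

end DyadicBlocks

theorem exists_pos_mul_exp_eq_le_one_add_posLog {x : ℝ} (hx : 0 < x) :
    ∃ w : ℝ, 0 < w ∧ w * exp w = x ∧ w ≤ 1 + log⁺ x := by
  have hu : 1 ≤ 1 + log⁺ x := le_add_of_nonneg_right posLog_nonneg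
  have hx_le : x ≤ (1 + log⁺ x) * exp (1 + log⁺ x) := by
    calc x = exp (log x) := (exp_log hx).symm
      _ ≤ exp (1 + log⁺ x) := by
          gcongr
          exact (le_max_right 0 (log x)).trans (le_add_of_nonneg_left zero_le_one)
      _ ≤ _ := le_mul_of_one_le_left (exp_pos _).le hu
  obtain ⟨w, ⟨hw0, hw_le⟩, hw⟩ := intermediate_value_Ioc (f := fun w => w * exp w)
    (zero_le_one.trans hu) (by fun_prop) ⟨by simpa using hx, hx_le⟩
  exact ⟨w, hw0, hw, hw_le⟩

theorem exists_summable_mul_exp_mul_eq {ι : Type*} {a r : ι → ℝ} (ha : ∀ i, 0 < a i)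
    (hr : ∀ i, 0 < r i) (ha_sum : Summable fun i => (a i)⁻¹)
    (har_sum : Summable fun i => log⁺ (a i * r i) / a i) :
    ∃ K : ℝ, 0 < K ∧ ∀ c : ℝ, 0 < c → ∃ d : ι → ℝ, (∀ i, 0 < d i) ∧
      (∀ i, d i * exp (a i * d i) = c * r i) ∧ Summable d ∧ ∑' i, d i < K * (1 + log⁺ c) := by
  have ha_tsum : 0 ≤ ∑' i, (a i)⁻¹ := tsum_nonneg fun i => (inv_pos.mpr (ha i)).le
  have har_tsum : 0 ≤ ∑' i, log⁺ (a i * r i) / a i :=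
    tsum_nonneg fun i => div_nonneg posLog_nonneg (ha i).le
  refine ⟨∑' i, (a i)⁻¹ + ∑' i, log⁺ (a i * r i) / a i + 1, by positivity, fun c hc => ?_⟩
  choose w hw0 hw hw_le using fun i =>
    exists_pos_mul_exp_eq_le_one_add_posLog (mul_pos hc (mul_pos (ha i) (hr i)))
  have bound (i : ι) : w i / a i ≤ (1 + log⁺ c) * (a i)⁻¹ + log⁺ (a i * r i) / a i := by
    rw [← div_eq_mul_inv, ← add_div]
    have := ha i
    gcongr
    linarith [hw_le i, posLog_mul (x := c) (y := a i * r i)]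
  have bound_sum := (ha_sum.mul_left (1 + log⁺ c)).add har_sum
  have d_pos (i : ι) : 0 < w i / a i := div_pos (hw0 i) (ha i)
  have d_sum : Summable fun i => w i / a i :=
    .of_nonneg_of_le (fun i => (d_pos i).le) bound bound_sum
  refine ⟨fun i => w i / a i, d_pos, fun i => ?_, d_sum, ?_⟩
  · rw [mul_div_cancel₀ _ (ha i).ne', div_mul_eq_mul_div, hw i]
    field_simp [(ha i).ne']
  · calc ∑' i, w i / a i ≤ _ := d_sum.tsum_le_tsum bound bound_sum
      _ = (1 + log⁺ c) * ∑' i, (a i)⁻¹ + ∑' i, log⁺ (a i * r i) / a i := by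
          rw [(ha_sum.mul_left _).tsum_add har_sum, tsum_mul_left]
      _ < _ := by nlinarith [posLog_nonneg (x := c)]

theorem summable_natCast_pow_div_two_pow (k : ℕ) :
    Summable fun n : ℕ => (n : ℝ) ^ k / 2 ^ n :=
  (summable_pow_mul_geometric_of_norm_lt_one k (r := (1 / 2 : ℝ)) (by norm_num)).congr fun n => by
    rw [one_div, inv_pow, div_eq_mul_inv]

/-- Sequences of positive reals with `∑ |log xₙ| / 2ⁿ < ∞`, the growth condition under which the
strip-width losses are summable. In `ℝ`, `Summable` already means absolute summability. -/
structure DyadicLogSummable (x : ℕ → ℝ) : Prop where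
  pos : ∀ n, 0 < x n
  summable_log : Summable fun n => log (x n) / 2 ^ n

namespace DyadicLogSummable

variable {x y : ℕ → ℝ}

protected theorem exp {f : ℕ → ℝ} (hf : Summable fun n => f n / 2 ^ n) :
    DyadicLogSummable fun n => exp (f n) :=
  ⟨fun n => exp_pos _, by simpa only [log_exp] using hf⟩

theorem const {c : ℝ} (hc : 0 < c) : DyadicLogSummable fun _ => c :=
  ⟨fun _ => hc, summable_geometric_two.mul_left (log c) |>.congr fun n => by
    rw [one_div, inv_pow, div_eq_mul_inv]⟩

theorem two_pow : DyadicLogSummable fun n => 2 ^ n :=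
  ⟨fun n => by positivity,
    (summable_natCast_pow_div_two_pow 1).mul_right (log 2) |>.congr fun n => by
      rw [log_pow, pow_one, div_mul_eq_mul_div]⟩

theorem mul (hx : DyadicLogSummable x) (hy : DyadicLogSummable y) :
    DyadicLogSummable fun n => x n * y n :=
  ⟨fun n => mul_pos (hx.pos n) (hy.pos n), (hx.summable_log.add hy.summable_log).congr fun n => by
    rw [log_mul (hx.pos n).ne' (hy.pos n).ne', add_div]⟩

theorem div (hx : DyadicLogSummable x) (hy : DyadicLogSummable y) :
    DyadicLogSummable fun n => x n / y n :=
  ⟨fun n => div_pos (hx.pos n) (hy.pos n), (hx.summable_log.sub hy.summable_log).congr fun n => by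
    rw [log_div (hx.pos n).ne' (hy.pos n).ne', sub_div]⟩

theorem shift (hx : DyadicLogSummable x) : DyadicLogSummable fun n => x (n + 1) :=
  ⟨fun n => hx.pos (n + 1),
    ((summable_nat_add_iff 1).mpr hx.summable_log).mul_left 2 |>.congr fun n => by
      rw [pow_succ]; field_simp⟩

theorem summable_posLog (hx : DyadicLogSummable x) : Summable fun n => log⁺ (x n) / 2 ^ n := by
  refine hx.summable_log.abs.of_nonneg_of_le
    (fun n => div_nonneg posLog_nonneg (by positivity)) fun n => ?_
  rw [abs_div, abs_of_pos (by positivity : (0 : ℝ) < 2 ^ n)]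
  gcongr
  exact max_le (abs_nonneg _) (le_abs_self _)

theorem comp_two_pow {f : ℕ → ℝ} (hf1 : 1 ≤ f 1) (hmono : MonotoneOn f (Set.Ici 1))
    (hsum : Summable fun N : ℕ => log (f (N + 1)) / ((N : ℝ) + 1) ^ 2) :
    DyadicLogSummable fun n => f (2 ^ n) := by
  have f_pos {N : ℕ} (hN : 1 ≤ N) : 0 < f N :=
    one_pos.trans_le (hf1.trans (hmono Set.self_mem_Ici hN hN))
  have hsum' : Summable fun N : ℕ => log (f N) / (N : ℝ) ^ (1 + 1) :=
    (summable_nat_add_iff 1).mp (by simpa using hsum)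
  refine ⟨fun n => f_pos Nat.one_le_two_pow, ?_⟩
  simpa only [pow_one] using summable_two_pow_div_of_summable_div_pow_succ (log_nonneg hf1)
    (fun M hM N hN hMN => log_le_log (f_pos hM) (hmono hM hN hMN)) hsum'

theorem exists_summable_width_loss {L : ℕ → ℝ} (hL : DyadicLogSummable L) :
    ∃ K : ℝ, 0 < K ∧ ∀ c : ℝ, 0 < c → ∃ d : ℕ → ℝ, (∀ n, 0 < d n) ∧
      (∀ n, L (n + 1) = c * L n * exp (-(2 * π * 2 ^ n * d n)) / d n) ∧
      Summable d ∧ ∑' n, d n < K * (1 + log⁺ c) := by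
  have hr : DyadicLogSummable fun n => L n / L (n + 1) := hL.div hL.shift
  have ha : DyadicLogSummable fun n => 2 * π * 2 ^ n :=
    (const two_pi_pos).mul two_pow
  have ha_sum : Summable fun n : ℕ => (2 * π * 2 ^ n)⁻¹ :=
    summable_geometric_two.mul_left (2 * π)⁻¹ |>.congr fun n => by
      rw [mul_inv (2 * π), one_div, inv_pow]
  have har_sum : Summable fun n => log⁺ (2 * π * 2 ^ n * (L n / L (n + 1))) / (2 * π * 2 ^ n) :=
    (ha.mul hr).summable_posLog.div_const (2 * π) |>.congr fun n => by
      rw [div_div, mul_comm (2 ^ n)]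
  obtain ⟨K, hK, h⟩ := exists_summable_mul_exp_mul_eq ha.pos hr.pos ha_sum har_sum
  refine ⟨K, hK, fun c hc => ?_⟩
  obtain ⟨d, hd0, hd, hd_sum⟩ := h c hc
  refine ⟨d, hd0, fun n => ?_, hd_sum⟩
  have hLn := hL.pos (n + 1)
  have hdn := hd n
  rw [← mul_div_assoc, eq_div_iff hLn.ne'] at hdn
  rw [eq_div_iff (hd0 n).ne', ← hdn, exp_neg]
  field_simp

end DyadicLogSummable

theorem one_le_inv_distNearestInt {x : ℝ} (hx : ∀ m : ℤ, x ≠ m) : 1 ≤ (distNearestInt x)⁻¹ := by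
  have hpos : 0 < distNearestInt x := abs_pos.mpr (sub_ne_zero.mpr (hx _))
  have hle : distNearestInt x ≤ 1 / 2 := abs_sub_round x
  exact (one_le_inv₀ hpos).mpr (by linarith)

theorem finite_setOf_int_abs_le (N : ℤ) : {n : ℤ | |n| ≤ N}.Finite :=
  (Set.finite_Icc (-N) N).subset fun _ hn => abs_le.mp hn

section Gamma

variable (α β : ℝ) (N : ℕ)

theorem bddAbove_GammaA :
    BddAbove ((fun n : ℤ => (distNearestInt ((n : ℝ) * α))⁻¹) ''
      {n : ℤ | n ≠ 0 ∧ |n| ≤ (N : ℤ)}) :=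
  (((finite_setOf_int_abs_le N).subset fun _ hn => hn.2).image _).bddAbove

theorem bddAbove_GammaAB :
    BddAbove ((fun n : ℤ => (distNearestInt ((n : ℝ) * α - β))⁻¹) '' {n : ℤ | |n| ≤ (N : ℤ)}) :=
  ((finite_setOf_int_abs_le N).image _).bddAbove

theorem monotoneOn_GammaA : MonotoneOn (GammaA α) (Set.Ici 1) := fun M hM N _ hMN =>
  csSup_le_csSup (bddAbove_GammaA α N)
    (Set.Nonempty.image _ ⟨1, one_ne_zero, by simpa using hM⟩)
    (Set.image_mono fun _ hn => ⟨hn.1, hn.2.trans (mod_cast hMN)⟩)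

theorem monotone_GammaAB : Monotone (GammaAB α β) := fun M N hMN =>
  csSup_le_csSup (bddAbove_GammaAB α β N) (Set.Nonempty.image _ ⟨0, by simp⟩)
    (Set.image_mono fun _ (hn : |_| ≤ (M : ℤ)) => hn.trans (mod_cast hMN))

variable {α β N}

theorem one_le_GammaA (hα : Irrational α) (hN : 1 ≤ N) : 1 ≤ GammaA α N :=
  (one_le_inv_distNearestInt (by simpa using hα.ne_int)).trans
    (le_csSup (bddAbove_GammaA α N) ⟨1, ⟨one_ne_zero, by simpa using hN⟩, rfl⟩)

theorem IsNonRationalPair.one_le_GammaAB (h : IsNonRationalPair α β) : 1 ≤ GammaAB α β N :=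
  (one_le_inv_distNearestInt (h 0)).trans (le_csSup (bddAbove_GammaAB α β N) ⟨0, by simp, rfl⟩)

end Gamma

theorem BrjunoPairCond.dyadicLogSummable_width {α β : ℝ} (h : BrjunoPairCond α β) :
    DyadicLogSummable fun n : ℕ => Real.exp (-(n : ℝ) ^ 2) /
      (16 * GammaAB α β (2 ^ n) * GammaA α (2 ^ n) * 2 ^ n) := by
  obtain ⟨hα, hαβ, hA, hAB⟩ := h
  have hGammaA : DyadicLogSummable fun n => GammaA α (2 ^ n) :=
    .comp_two_pow (one_le_GammaA hα le_rfl) (monotoneOn_GammaA α) hA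
  have hGammaAB : DyadicLogSummable fun n => GammaAB α β (2 ^ n) :=
    .comp_two_pow hαβ.one_le_GammaAB ((monotone_GammaAB α β).monotoneOn _) hAB
  have hexp : DyadicLogSummable fun n => Real.exp (-(n : ℝ) ^ 2) :=
    .exp ((summable_natCast_pow_div_two_pow 2).neg.congr fun n => (neg_div _ _).symm)
  have h16 : DyadicLogSummable fun _ => 16 := .const (by norm_num)
  exact hexp.div (((h16.mul hGammaAB).mul hGammaA).mul .two_pow)

theorem stmt_10_general {α β : ℝ} (hB1 : BrjunoPairCond α β) :
    ∃ K₁ : ℝ, 0 < K₁ ∧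
      ∀ aleph : ℝ, 0 < aleph →
        ∀ l : ℕ → ℝ,
          (∀ n : ℕ, l n = Real.exp (-(n : ℝ) ^ 2) /
              (16 * aleph * GammaAB α β (2 ^ n) * GammaA α (2 ^ n) * 2 ^ n)) →
          ∃ d : ℕ → ℝ, (∀ n : ℕ, 0 < d n) ∧
            (∀ n : ℕ, l (n + 1) = aleph * l n * Real.exp (-(2 * Real.pi * 2 ^ n * d n)) / d n) ∧
            Summable d ∧ (∑' n : ℕ, d n) < K₁ * (1 + log⁺ aleph) := by
  obtain ⟨K₁, hK₁, h⟩ := hB1.dyadicLogSummable_width.exists_summable_width_loss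
  refine ⟨K₁, hK₁, fun aleph haleph l hl => ?_⟩
  obtain ⟨d, hd0, hd, hd_sum⟩ := h aleph haleph
  have hl_eq (n : ℕ) : l n = Real.exp (-(n : ℝ) ^ 2) /
      (16 * GammaAB α β (2 ^ n) * GammaA α (2 ^ n) * 2 ^ n) / aleph := by
    rw [hl, div_div]; ring_nf
  refine ⟨d, hd0, fun n => ?_, hd_sum⟩
  rw [hl_eq, hl_eq, hd]
  ring

end

/-- existence of the sequence of strip-width losses d_n¹ with summable
total loss, controlled by K₁(1 + log ℵ). -/
theorem stmt_10 (α β : ℝ) (hB1 : BrjunoPairCond α β) :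
    ∃ K₁ : ℝ, 0 < K₁ ∧
      ∀ aleph : ℝ, 2 < aleph →
        ∀ l : ℕ → ℝ,
          (∀ n : ℕ, l n = Real.exp (-(n : ℝ) ^ 2) /
              (16 * aleph * GammaAB α β (2 ^ n) * GammaA α (2 ^ n) * 2 ^ n)) →
          ∃ d : ℕ → ℝ, (∀ n : ℕ, 0 < d n) ∧
            (∀ n : ℕ, l (n + 1) = aleph * l n * Real.exp (-(2 * Real.pi * 2 ^ n * d n)) / d n) ∧
            Summable d ∧ (∑' n : ℕ, d n) < K₁ * (1 + Real.log aleph) := by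
  obtain ⟨K₁, hK₁, h⟩ := stmt_10_general hB1
  refine ⟨K₁, hK₁, fun aleph haleph l hl => ?_⟩
  simpa only [Real.posLog_eq_log (show 1 ≤ |aleph| from le_abs.mpr (.inl (by linarith)))] using
    h aleph (by linarith) l hl
end
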